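/- Let R_0 → R_1 → … → R_m be an arbitrary finite sequence of elementary moves of rectangular diagrams containing k stabilizations and ℓ destabilizations. Then there exists another finite sequence of elementary moves R_0 → R_1′ → … → R_n′ = R_m in which the first k moves are stabilizations, the last ℓ moves are destabilizations, and all other moves are cyclic permutations and commutations; moreover, the number of stabilizations and of destabilizations of each type (I and II) in the new sequence is the same as in the original one. -/

import Mathlib

noncomputable section
open scoped Classical

/-- A point of the plane. -/
abbrev Pt : Type := ℝ × ℝ

/-- A rectangular diagram: a finite set of points in the plane such that every
vertical or horizontal straight line contains either no points or exactly two points of it. -/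
def IsDiagram (R : Finset Pt) : Prop :=
  ∀ p ∈ R, (R.filter (fun q => q.1 = p.1)).card = 2 ∧
    (R.filter (fun q => q.2 = p.2)).card = 2

/-- The complexity of a rectangular diagram: the number of its vertical edges. -/
def complexity (R : Finset Pt) : ℕ := (R.image Prod.fst).card

/-- Moving the vertical line `x0` to position `x1` (all other points unchanged). -/
def vmap (x0 x1 : ℝ) : Pt → Pt := fun p => if p.1 = x0 then (x1, p.2) else p

/-- Moving the horizontal line `y0` to position `y1`. -/
def hmap (y0 y1 : ℝ) : Pt → Pt := fun p => if p.2 = y0 then (p.1, y1) else p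

/-- Exchanging the vertical lines `x1` and `x2`. -/
def swapv (x1 x2 : ℝ) : Pt → Pt := fun p =>
  if p.1 = x1 then (x2, p.2) else if p.1 = x2 then (x1, p.2) else p

/-- Exchanging the horizontal lines `y1` and `y2`. -/
def swaph (y1 y2 : ℝ) : Pt → Pt := fun p =>
  if p.2 = y1 then (p.1, y2) else if p.2 = y2 then (p.1, y1) else p

/-- `f` realizes a cyclic permutation on the finite set `R`:  an extreme (left/right/top/bottom)
edge is moved to the opposite side of the diagram. -/
def CyclicData (R : Finset Pt) (f : Pt → Pt) : Prop :=
  (∃ x0 x1 : ℝ, (∃ p ∈ R, p.1 = x0) ∧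
     (((∀ p ∈ R, x0 ≤ p.1) ∧ ∀ p ∈ R, p.1 ≠ x0 → p.1 < x1) ∨
      ((∀ p ∈ R, p.1 ≤ x0) ∧ ∀ p ∈ R, p.1 ≠ x0 → x1 < p.1)) ∧
     f = vmap x0 x1) ∨
  (∃ y0 y1 : ℝ, (∃ p ∈ R, p.2 = y0) ∧
     (((∀ p ∈ R, y0 ≤ p.2) ∧ ∀ p ∈ R, p.2 ≠ y0 → p.2 < y1) ∨
      ((∀ p ∈ R, p.2 ≤ y0) ∧ ∀ p ∈ R, p.2 ≠ y0 → y1 < p.2)) ∧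
     f = hmap y0 y1)

/-- The pairs of second coordinates of the points of `R` on the vertical lines `x1`, `x2`
do not interleave. -/
def NoInterleaveV (R : Finset Pt) (x1 x2 : ℝ) : Prop :=
  ∀ p ∈ R, ∀ p' ∈ R, ∀ q ∈ R, ∀ q' ∈ R,
    p.1 = x1 → p'.1 = x1 → q.1 = x2 → q'.1 = x2 →
    ¬ ((p.2 < q.2 ∧ q.2 < p'.2 ∧ p'.2 < q'.2) ∨
       (q.2 < p.2 ∧ p.2 < q'.2 ∧ q'.2 < p'.2))

/-- The pairs of first coordinates of the points of `R` on the horizontal lines `y1`, `y2`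
do not interleave. -/
def NoInterleaveH (R : Finset Pt) (y1 y2 : ℝ) : Prop :=
  ∀ p ∈ R, ∀ p' ∈ R, ∀ q ∈ R, ∀ q' ∈ R,
    p.2 = y1 → p'.2 = y1 → q.2 = y2 → q'.2 = y2 →
    ¬ ((p.1 < q.1 ∧ q.1 < p'.1 ∧ p'.1 < q'.1) ∨
       (q.1 < p.1 ∧ p.1 < q'.1 ∧ q'.1 < p'.1))

/-- `f` realizes a commutation on `R`: two neighboring parallel edges, whose pairs of endpoints
projected to the common axis are disjoint and do not interleave, are exchanged. -/
def CommData (R : Finset Pt) (f : Pt → Pt) : Prop :=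
  (∃ x1 x2 : ℝ, x1 ≠ x2 ∧ (∃ p ∈ R, p.1 = x1) ∧ (∃ p ∈ R, p.1 = x2) ∧
     (∀ p ∈ R, ¬ (min x1 x2 < p.1 ∧ p.1 < max x1 x2)) ∧
     (∀ p ∈ R, ∀ q ∈ R, p.1 = x1 → q.1 = x2 → p.2 ≠ q.2) ∧
     NoInterleaveV R x1 x2 ∧ f = swapv x1 x2) ∨
  (∃ y1 y2 : ℝ, y1 ≠ y2 ∧ (∃ p ∈ R, p.2 = y1) ∧ (∃ p ∈ R, p.2 = y2) ∧
     (∀ p ∈ R, ¬ (min y1 y2 < p.2 ∧ p.2 < max y1 y2)) ∧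
     (∀ p ∈ R, ∀ q ∈ R, p.2 = y1 → q.2 = y2 → p.1 ≠ q.1) ∧
     NoInterleaveH R y1 y2 ∧ f = swaph y1 y2)

/-- A cyclic permutation move of rectangular diagrams. -/
def CyclicMove (R R' : Finset Pt) : Prop :=
  IsDiagram R ∧ IsDiagram R' ∧ ∃ f, CyclicData R f ∧ R' = R.image f

/-- A commutation move of rectangular diagrams. -/
def CommMove (R R' : Finset Pt) : Prop :=
  IsDiagram R ∧ IsDiagram R' ∧ ∃ f, CommData R f ∧ R' = R.image f

/-- The type of a stabilization/destabilization. -/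
inductive StabType
  | I : StabType
  | II : StabType
deriving DecidableEq

/-- Result of replacing the vertex `(x, y)` by the three other vertices of the small square
with corners `(x, y)`, `(x', y)`, `(x, y')`, `(x', y')`. -/
def stabSet (x y x' y' : ℝ) (C : Finset Pt) : Finset Pt :=
  insert ((x', y) : Pt) (insert ((x, y') : Pt) (insert ((x', y') : Pt) (C.erase (x, y))))

/-- The data of a stabilization of `R` at the vertex `(x, y)`, yielding `R'`:  the vertex is
replaced by the three other corners of a small square (`x'`, `y'` are fresh coordinates,
and no coordinate of `R` lies strictly between `x, x'` nor between `y, y'`). -/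
def StabData (x y x' y' : ℝ) (R R' : Finset Pt) : Prop :=
  (x, y) ∈ R ∧ x ≠ x' ∧ y ≠ y' ∧
  (∀ p ∈ R, p.1 ≠ x') ∧ (∀ p ∈ R, p.2 ≠ y') ∧
  (∀ p ∈ R, ¬ (min x x' < p.1 ∧ p.1 < max x x')) ∧
  (∀ p ∈ R, ¬ (min y y' < p.2 ∧ p.2 < max y y')) ∧
  R' = stabSet x y x' y' R

/-- A stabilization of type `t` occurring at the vertex `v` of `R`.  The type is I when the two
new short edges point from their common vertex downward-and-leftward or upward-and-rightward. -/
def StabMoveAt (t : StabType) (v : Pt) (R R' : Finset Pt) : Prop :=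
  IsDiagram R ∧ IsDiagram R' ∧
  ∃ x' y' : ℝ, StabData v.1 v.2 x' y' R R' ∧
    (t = StabType.I ↔ 0 < (v.1 - x') * (v.2 - y'))

/-- A stabilization of type `t`. -/
def StabMove (t : StabType) (R R' : Finset Pt) : Prop :=
  ∃ v : Pt, StabMoveAt t v R R'

/-- A complexity-preserving elementary move: a cyclic permutation or a commutation. -/
def ExchangeMove (R R' : Finset Pt) : Prop := CyclicMove R R' ∨ CommMove R R'

/-- An elementary move of rectangular diagrams: a cyclic permutation, a commutation,
a stabilization or a destabilization. -/
def ElemMove (R R' : Finset Pt) : Prop :=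
  CyclicMove R R' ∨ CommMove R R' ∨ ∃ t, StabMove t R R' ∨ StabMove t R' R

/-- An elementary move involving no stabilization or destabilization of type other than `t`. -/
def LegMove (t : StabType) (R R' : Finset Pt) : Prop :=
  CyclicMove R R' ∨ CommMove R R' ∨ StabMove t R R' ∨ StabMove t R' R

/-- Legendrian equivalence: connected by a finite sequence of elementary moves containing
no type II stabilizations or destabilizations. -/
def LegEquiv : Finset Pt → Finset Pt → Prop :=
  Relation.ReflTransGen (LegMove StabType.I)

/-- Connected by a finite sequence of elementary moves containing
no type I stabilizations or destabilizations. -/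
def MirrorEquiv : Finset Pt → Finset Pt → Prop :=
  Relation.ReflTransGen (LegMove StabType.II)

/-- An elementary simplification of type `t` : a finite sequence of cyclic permutations and
commutations followed by one destabilization of type `t`. -/
def ElemSimp (t : StabType) (R R' : Finset Pt) : Prop :=
  ∃ S, Relation.ReflTransGen ExchangeMove R S ∧ StabMove t R' S
/-- A label for an elementary move. -/
inductive MoveLabel
  | cyclic : MoveLabel
  | comm : MoveLabel
  | stab : StabType → MoveLabel
  | destab : StabType → MoveLabel
deriving DecidableEq

/-- The move relation named by a label. -/
def LMove : MoveLabel → Finset Pt → Finset Pt → Prop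
  | .cyclic => CyclicMove
  | .comm => CommMove
  | .stab t => StabMove t
  | .destab t => fun R R' => StabMove t R' R

/-- `IsMoveSeq L R R'` : the list of labeled elementary moves `L` transforms `R` into `R'`. -/
def IsMoveSeq : List MoveLabel → Finset Pt → Finset Pt → Prop
  | [], R, R' => R = R'
  | (l :: ls), R, R' => ∃ S, LMove l R S ∧ IsMoveSeq ls S R'

/-!
The three new vertices of a stabilization span a short vertical and a short horizontal edge. No
vertex separates the endpoints of a short edge, so exchange moves (cyclic permutations and
commutations) carry it along the edges of the diagram: up to exchange moves, the stabilizations of a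
given type at two vertices in a common row or column have the same result. Two such slides move a
stabilization off the two columns affected by an exchange move, or off the column and the row
affected by another stabilization. It then commutes with that move, so that stabilizations can be
pulled to the left through exchange moves and destabilizations, at the price of further exchange
moves.
-/

/-! ### Columns and rows -/

section Columns

variable {R : Finset Pt} {x y a b c : ℝ}

/-- The abscissas of the vertical edges of a diagram. -/
def cols (R : Finset Pt) : Finset ℝ := R.image Prod.fst

/-- The ordinates of the horizontal edges of a diagram. -/
def rows (R : Finset Pt) : Finset ℝ := R.image Prod.snd

/-- The ordinates of the vertices on a vertical line, i.e. the endpoints of a vertical edge. -/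
def col (R : Finset Pt) (x : ℝ) : Set ℝ := {y | (x, y) ∈ R}

/-- The reflection of a diagram in the main diagonal, which exchanges columns and rows. -/
def transpose (R : Finset Pt) : Finset Pt := R.image Prod.swap

/-- The diagram obtained by moving every vertical edge according to `g`. -/
def relabelCols (g : ℝ → ℝ) (R : Finset Pt) : Finset Pt := R.image (Prod.map g id)

lemma mem_cols : x ∈ cols R ↔ ∃ y, (x, y) ∈ R := by simp [cols]

lemma mem_cols_of_mem (h : (x, y) ∈ R) : x ∈ cols R := mem_cols.2 ⟨y, h⟩

lemma mem_rows : y ∈ rows R ↔ ∃ x, (x, y) ∈ R := by simp [rows]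

lemma mem_rows_of_mem (h : (x, y) ∈ R) : y ∈ rows R := mem_rows.2 ⟨x, h⟩

@[simp]
lemma mem_col : y ∈ col R x ↔ (x, y) ∈ R := Iff.rfl

@[simp]
lemma mem_transpose : (x, y) ∈ transpose R ↔ (y, x) ∈ R := by
  simp [transpose, Prod.swap_eq_iff_eq_swap]

@[simp]
lemma transpose_transpose (R : Finset Pt) : transpose (transpose R) = R := by ext ⟨x, y⟩; simp

@[simp]
lemma cols_transpose (R : Finset Pt) : cols (transpose R) = rows R := by
  ext; simp [mem_cols, mem_rows]

@[simp]
lemma rows_transpose (R : Finset Pt) : rows (transpose R) = cols R := by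
  rw [← cols_transpose, transpose_transpose]

lemma mem_relabelCols {g : ℝ → ℝ} :
    (x, y) ∈ relabelCols g R ↔ ∃ a, (a, y) ∈ R ∧ g a = x := by
  simp [relabelCols]

lemma mem_relabelCols_perm {σ : Equiv.Perm ℝ} :
    (x, y) ∈ relabelCols σ R ↔ (σ.symm x, y) ∈ R := by
  simp [mem_relabelCols, ← Equiv.eq_symm_apply]

lemma mem_relabelCols_swap :
    (x, y) ∈ relabelCols (Equiv.swap a b) R ↔ (Equiv.swap a b x, y) ∈ R := by
  rw [mem_relabelCols_perm, Equiv.symm_swap]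

@[simp]
lemma cols_relabelCols (g : ℝ → ℝ) (R : Finset Pt) :
    cols (relabelCols g R) = (cols R).image g := by
  simp [cols, relabelCols, Finset.image_image, Function.comp_def]

@[simp]
lemma rows_relabelCols (g : ℝ → ℝ) (R : Finset Pt) : rows (relabelCols g R) = rows R := by
  simp [rows, relabelCols, Finset.image_image, Function.comp_def]

lemma col_relabelCols_swap (R : Finset Pt) (a b x : ℝ) :
    col (relabelCols (Equiv.swap a b) R) x = col R (Equiv.swap a b x) :=
  Set.ext fun _ ↦ mem_relabelCols_swap

lemma mem_cols_relabelCols_swap :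
    x ∈ cols (relabelCols (Equiv.swap a b) R) ↔ Equiv.swap a b x ∈ cols R := by
  simp only [mem_cols, mem_relabelCols_swap]

lemma relabelCols_relabelCols (f g : ℝ → ℝ) (R : Finset Pt) :
    relabelCols f (relabelCols g R) = relabelCols (f ∘ g) R := by
  simp only [relabelCols, Finset.image_image, Prod.map_comp_map, Function.comp_id]

lemma relabelCols_swap_swap (R : Finset Pt) (a b : ℝ) :
    relabelCols (Equiv.swap a b) (relabelCols (Equiv.swap a b) R) = R := by
  ext ⟨x, y⟩
  simp [mem_relabelCols_swap]

lemma cols_relabelCols_swap (ha : a ∈ cols R) (hb : b ∈ cols R) :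
    cols (relabelCols (Equiv.swap a b) R) = cols R := by
  ext x
  rw [mem_cols_relabelCols_swap, Equiv.swap_apply_def]
  grind

lemma relabelCols_congr {f g : ℝ → ℝ} (h : Set.EqOn f g (cols R)) :
    relabelCols f R = relabelCols g R :=
  Finset.image_congr fun _ hp ↦ Prod.ext (h (mem_cols_of_mem hp)) rfl

lemma relabelCols_eq_self {g : ℝ → ℝ} (h : Set.EqOn g id (cols R)) : relabelCols g R = R := by
  rw [relabelCols_congr h, relabelCols, Prod.map_id, Finset.image_id]

/-- Every vertical line that meets `R` does so in exactly two points. -/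
def PairedCols (R : Finset Pt) : Prop := ∀ x ∈ cols R, (col R x).ncard = 2

lemma card_filter_fst_eq (R : Finset Pt) (x : ℝ) :
    (R.filter fun q ↦ q.1 = x).card = (col R x).ncard := by
  have h : (fun y ↦ (x, y)) '' col R x = (R.filter fun q ↦ q.1 = x) := by
    ext ⟨a, b⟩
    simp only [Set.mem_image, mem_col, Prod.mk.injEq, Finset.coe_filter, Set.mem_ofPred_eq]
    grind
  rw [← Set.ncard_coe_finset, ← h, Set.ncard_image_of_injective _ (Prod.mk_right_injective x)]

lemma card_filter_snd_eq (R : Finset Pt) (y : ℝ) :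
    (R.filter fun q ↦ q.2 = y).card = (col (transpose R) y).ncard := by
  rw [← card_filter_fst_eq, transpose, Finset.filter_image,
    Finset.card_image_of_injective _ Prod.swap_injective]
  rfl

lemma isDiagram_iff : IsDiagram R ↔ PairedCols R ∧ PairedCols (transpose R) := by
  have hrows : (∀ y ∈ cols (transpose R), (col (transpose R) y).ncard = 2) ↔
      ∀ p ∈ R, (col (transpose R) p.2).ncard = 2 := by
    rw [cols_transpose, rows, Finset.forall_mem_image]
  rw [PairedCols, PairedCols, hrows, cols, Finset.forall_mem_image]
  simp only [IsDiagram, card_filter_fst_eq, card_filter_snd_eq, forall_and]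

namespace IsDiagram

protected lemma transpose (hR : IsDiagram R) : IsDiagram (transpose R) := by
  rw [isDiagram_iff, transpose_transpose]
  exact (isDiagram_iff.1 hR).symm

lemma exists_pair_row (hR : IsDiagram R) (h : (a, y) ∈ R) :
    ∃ c ≠ a, ∀ x, (x, y) ∈ R ↔ x = a ∨ x = c := by
  obtain ⟨p, q, hpq, hcol⟩ := Set.ncard_eq_two.1 <|
    (isDiagram_iff.1 hR).2 y (mem_cols_of_mem (mem_transpose.2 h))
  simp only [Set.ext_iff, mem_col, mem_transpose, Set.mem_insert_iff, Set.mem_singleton_iff] at hcol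
  rcases (hcol a).1 h with rfl | rfl
  · exact ⟨q, hpq.symm, hcol⟩
  · exact ⟨p, hpq, fun x ↦ (hcol x).trans or_comm⟩

lemma exists_mem_row_ne (hR : IsDiagram R) (h : (a, y) ∈ R) (x : ℝ) :
    ∃ c ≠ x, (c, y) ∈ R := by
  obtain ⟨c, hca, hc⟩ := hR.exists_pair_row h
  by_cases hax : a = x
  · exact ⟨c, hax ▸ hca, (hc c).2 (.inr rfl)⟩
  · exact ⟨a, hax, h⟩

lemma exists_mem_col_ne (hR : IsDiagram R) (h : (x, b) ∈ R) (y : ℝ) :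
    ∃ d ≠ y, (x, d) ∈ R := by
  simpa using hR.transpose.exists_mem_row_ne (mem_transpose.2 h) y

lemma eq_or_eq_of_mem_row (hR : IsDiagram R) (ha : (a, y) ∈ R) (hb : (b, y) ∈ R) (hc : (c, y) ∈ R)
    (hab : a ≠ b) : c = a ∨ c = b := by
  obtain ⟨d, -, hd⟩ := hR.exists_pair_row ha
  grind

protected lemma relabelCols {g : ℝ → ℝ} (hR : IsDiagram R) (hg : Set.InjOn g (cols R)) :
    IsDiagram (relabelCols g R) := by
  rw [isDiagram_iff] at hR ⊢
  constructor
  · intro x hx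
    obtain ⟨a, ha, rfl⟩ := Finset.mem_image.1 (cols_relabelCols g R ▸ hx)
    have hcol : col (relabelCols g R) (g a) = col R a := by
      ext y
      refine mem_relabelCols.trans ⟨?_, fun h ↦ ⟨a, h, rfl⟩⟩
      rintro ⟨c, hc, hca⟩
      rwa [hg (mem_cols_of_mem hc) ha hca] at hc
    rw [hcol, hR.1 a ha]
  · intro y hy
    have hrow : col (transpose (relabelCols g R)) y = g '' col (transpose R) y := by
      ext x
      simp [mem_relabelCols]
    rw [cols_transpose, rows_relabelCols, ← cols_transpose] at hy
    have hsub : col (transpose R) y ⊆ cols R := fun x hx ↦ mem_cols_of_mem (mem_transpose.1 hx)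
    rw [hrow, (hg.mono hsub).ncard_image, hR.2 y hy]

lemma relabelCols_swap (hR : IsDiagram R) (a b : ℝ) :
    IsDiagram (relabelCols (Equiv.swap a b) R) :=
  hR.relabelCols (Equiv.injective _).injOn

end IsDiagram

end Columns

/-! ### Gaps of finite sets -/

section SameGap

variable {α : Type*} [LinearOrder α] {F G : Finset α} {x x' x'' c c' : α}

/-- No point of `F` other than `x` separates `x` from `x'`, nor equals `x'`: moving a coordinate
from `x` to `x'` does not change its position relative to the rest of `F`. -/
def SameGap (F : Finset α) (x x' : α) : Prop :=
  ∀ r ∈ F, r ≠ x → (r < x' ↔ r < x) ∧ (x' < r ↔ x < r)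

lemma SameGap.mono (h : SameGap G x x') (hFG : F ⊆ G) : SameGap F x x' :=
  fun r hr ↦ h r (hFG hr)

lemma SameGap.notMem (h : SameGap F x x') (hne : x ≠ x') : x' ∉ F := fun hx' ↦ by
  have := h x' hx' hne.symm
  grind

lemma exists_sameGap [DenselyOrdered α] [NoMinOrder α] [NoMaxOrder α] (F : Finset α) (x : α)
    (up : Prop) : ∃ x', x ≠ x' ∧ SameGap F x x' ∧ (x < x' ↔ up) := by
  have : Nonempty α := ⟨x⟩
  by_cases hup : up
  · obtain ⟨x', hlo, hhi⟩ := Order.exists_between_finsets {x} (F.filter (x < ·)) (by simp)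
    simp only [Finset.mem_singleton, forall_eq, Finset.mem_filter, and_imp] at hlo hhi
    exact ⟨x', hlo.ne, fun r hr _ ↦ by grind, iff_of_true hlo hup⟩
  · obtain ⟨x', hlo, hhi⟩ := Order.exists_between_finsets (F.filter (· < x)) {x} (by simp)
    simp only [Finset.mem_singleton, forall_eq, Finset.mem_filter, and_imp] at hlo hhi
    exact ⟨x', hhi.ne', fun r hr _ ↦ by grind, iff_of_false hhi.not_gt hup⟩

lemma SameGap.strictMonoOn_swap (h : SameGap F x x') : StrictMonoOn (Equiv.swap x x') F := by
  intro r hr s hs hrs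
  have hr' := h r hr
  have hs' := h s hs
  simp only [Equiv.swap_apply_def]
  grind

lemma SameGap.strictMonoOn_swap_mul_swap (hgap' : SameGap F x x') (hx'' : x ≠ x'')
    (hgap'' : SameGap (insert x' F) x x'') (hside : x < x'' ↔ ¬x < x') :
    StrictMonoOn ⇑(Equiv.swap x x' * Equiv.swap x x'') (insert x' F : Finset α) := by
  intro r hr s hs hrs
  have := hgap' r
  have := hgap' s
  have := hgap'' r hr
  have := hgap'' s hs
  simp only [Finset.coe_insert, Set.mem_insert_iff, Finset.mem_coe] at hr hs
  simp only [Equiv.Perm.mul_apply, Equiv.swap_apply_def]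
  grind

lemma SameGap.insert_of_insert (h : SameGap (insert c' F) x x') (h' : SameGap F c c')
    (hx : x ∈ F) (hc : c ∈ F) (hxc : x ≠ c) (hc' : c' ∉ F) : SameGap (insert x' F) c c' := by
  intro r hr hrc
  have := h c' (Finset.mem_insert_self _ _) (fun hc'x ↦ hc' (hc'x ▸ hx))
  have := h c (Finset.mem_insert_of_mem hc) hxc.symm
  have := h' x hx hxc
  have := h' r
  grind

lemma exists_neighbor_of_not_sameGap (hx' : x' ∉ F) (h : ¬SameGap F x x') :
    ∃ c ∈ F, c ≠ x ∧ ¬(c < x ↔ c < x') ∧ ∀ d ∈ F, d ≠ x → d ≠ c → (d < x ↔ d < c) := by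
  obtain ⟨r, hr, hrx, hrsep⟩ : ∃ r ∈ F, r ≠ x ∧ ¬(r < x ↔ r < x') := by
    simp only [SameGap] at h
    grind
  rcases lt_or_ge x x' with hxx' | hxx'
  · obtain ⟨c, hc, hmin⟩ := (F.filter fun c ↦ x < c ∧ c < x').exists_min_image id ⟨r, by grind⟩
    simp only [Finset.mem_filter, id] at hc hmin
    exact ⟨c, hc.1, hc.2.1.ne', by grind, fun d hd hdx _ ↦ by grind⟩
  · obtain ⟨c, hc, hmax⟩ := (F.filter fun c ↦ x' < c ∧ c < x).exists_max_image id ⟨r, by grind⟩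
    simp only [Finset.mem_filter, id] at hc hmax
    exact ⟨c, hc.1, hc.2.2.ne, by grind, fun d hd _ hdc ↦ by grind⟩

end SameGap

/-! ### Exchange moves -/

section ExchangeMoves

variable {R R' S : Finset Pt} {a b : ℝ}

/-- Two sets of reals are disjoint and no two pairs of points taken from them interleave. -/
def Unlinked (s t : Set ℝ) : Prop :=
  Disjoint s t ∧ ∀ p ∈ s, ∀ p' ∈ s, ∀ q ∈ t, ∀ q' ∈ t,
    ¬((p < q ∧ q < p' ∧ p' < q') ∨ (q < p ∧ p < q' ∧ q' < p'))

lemma unlinked_of_forall_lt_iff {s t : Set ℝ}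
    (h : ∀ q ∈ t, ∀ p ∈ s, ∀ p' ∈ s, q ≠ p ∧ (q < p ↔ q < p')) : Unlinked s t := by
  refine ⟨Set.disjoint_left.2 fun p hp hq ↦ (h p hq p hp p hp).1 rfl, ?_⟩
  intro p hp p' hp' q hq q' hq'
  have hq₁ := h q hq p hp p' hp'
  have hq₂ := h q' hq' p hp p' hp'
  grind

/-- The column `a` is extreme in `R` and `b` lies beyond all columns on the opposite side. -/
structure IsColCycle (R : Finset Pt) (a b : ℝ) : Prop where
  mem : a ∈ cols R
  extreme : (∀ c ∈ cols R, a ≤ c ∧ c < b) ∨ ∀ c ∈ cols R, b < c ∧ c ≤ a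

/-- The columns `a` and `b` of `R` are neighbors and may be exchanged by a commutation. -/
structure IsColSwap (R : Finset Pt) (a b : ℝ) : Prop where
  ne : a ≠ b
  left_mem : a ∈ cols R
  right_mem : b ∈ cols R
  neighbors : ∀ c ∈ cols R, c ≠ a → c ≠ b → (c < a ↔ c < b)
  unlinked : Unlinked (col R a) (col R b)

/-- A cyclic permutation or a commutation of vertical edges. Both are relabelings of the columns
by a transposition, since the target position of a cyclic permutation is not occupied. -/
def ColExchange (R R' : Finset Pt) : Prop :=
  IsDiagram R ∧ ∃ a b, (IsColCycle R a b ∨ IsColSwap R a b) ∧ R' = relabelCols (Equiv.swap a b) R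

lemma IsColCycle.notMem (h : IsColCycle R a b) : b ∉ cols R := fun hb ↦ by
  rcases h.extreme with h | h
  · exact (h b hb).2.false
  · exact (h b hb).1.false

lemma IsColCycle.symm (h : IsColCycle R a b) :
    IsColCycle (relabelCols (Equiv.swap a b) R) b a := by
  have ha := h.mem
  have := h.notMem
  refine ⟨by rwa [mem_cols_relabelCols_swap, Equiv.swap_apply_right], ?_⟩
  simp only [mem_cols_relabelCols_swap, Equiv.swap_apply_def]
  rcases h.extreme with h | h
  · right; grind
  · left; grind

lemma IsColSwap.symm (h : IsColSwap R a b) :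
    IsColSwap (relabelCols (Equiv.swap a b) R) b a := by
  have hcols := cols_relabelCols_swap h.left_mem h.right_mem
  refine ⟨h.ne.symm, hcols ▸ h.right_mem, hcols ▸ h.left_mem, ?_, ?_⟩
  · rw [hcols]
    exact fun c hc hb ha ↦ (h.neighbors c hc ha hb).symm
  · simpa only [col_relabelCols_swap, Equiv.swap_apply_left, Equiv.swap_apply_right] using
      h.unlinked

lemma ColExchange.symm (h : ColExchange R R') : ColExchange R' R := by
  obtain ⟨hR, a, b, hab, rfl⟩ := h
  refine ⟨hR.relabelCols_swap a b, b, a, hab.imp IsColCycle.symm IsColSwap.symm, ?_⟩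
  rw [Equiv.swap_comm b a, relabelCols_swap_swap]

lemma image_vmap (hb : b ∉ cols R) : R.image (vmap a b) = relabelCols (Equiv.swap a b) R := by
  refine Finset.image_congr fun p hp ↦ ?_
  have : p.1 ≠ b := fun h ↦ hb (h ▸ mem_cols_of_mem hp)
  simp only [vmap, Prod.map, Equiv.swap_apply_def]
  grind

lemma image_swapv : R.image (swapv a b) = relabelCols (Equiv.swap a b) R := by
  refine Finset.image_congr fun p _ ↦ ?_
  simp only [swapv, Prod.map, Equiv.swap_apply_def]
  grind

lemma transpose_image_hmap : transpose (R.image (hmap a b)) = (transpose R).image (vmap a b) := by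
  simp only [transpose, Finset.image_image]
  refine Finset.image_congr fun p _ ↦ ?_
  simp only [Function.comp, hmap, vmap, Prod.swap]
  grind

lemma transpose_image_swaph :
    transpose (R.image (swaph a b)) = (transpose R).image (swapv a b) := by
  simp only [transpose, Finset.image_image]
  refine Finset.image_congr fun p _ ↦ ?_
  simp only [Function.comp, swaph, swapv, Prod.swap]
  grind

lemma isColCycle_iff (hR : IsDiagram R) :
    IsColCycle R a b ↔ (∃ p ∈ R, p.1 = a) ∧
      (((∀ p ∈ R, a ≤ p.1) ∧ ∀ p ∈ R, p.1 ≠ a → p.1 < b) ∨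
        ((∀ p ∈ R, p.1 ≤ a) ∧ ∀ p ∈ R, p.1 ≠ a → b < p.1)) := by
  constructor
  · rintro ⟨ha, hab⟩
    simp only [cols, Finset.mem_image] at ha hab
    grind
  · rintro ⟨⟨⟨a, y⟩, ha, rfl⟩, h⟩
    obtain ⟨c, hca, hc⟩ := hR.exists_mem_row_ne ha a
    refine ⟨mem_cols_of_mem ha, ?_⟩
    simp only [cols, Finset.forall_mem_image]
    rcases h with ⟨hle, hlt⟩ | ⟨hle, hlt⟩
    · have hac := (hle _ hc).trans_lt (hlt _ hc hca)
      grind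
    · have hac := (hlt _ hc hca).trans_le (hle _ hc)
      grind

lemma isColSwap_iff : IsColSwap R a b ↔
    a ≠ b ∧ (∃ p ∈ R, p.1 = a) ∧ (∃ p ∈ R, p.1 = b) ∧
      (∀ p ∈ R, ¬(min a b < p.1 ∧ p.1 < max a b)) ∧
      (∀ p ∈ R, ∀ q ∈ R, p.1 = a → q.1 = b → p.2 ≠ q.2) ∧ NoInterleaveV R a b := by
  have hneighbors : (∀ c ∈ cols R, c ≠ a → c ≠ b → (c < a ↔ c < b)) ↔
      ∀ p ∈ R, ¬(min a b < p.1 ∧ p.1 < max a b) := by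
    rw [cols, Finset.forall_mem_image]
    refine forall₂_congr fun p _ ↦ ?_
    grind
  have hdisjoint : Disjoint (col R a) (col R b) ↔
      ∀ p ∈ R, ∀ q ∈ R, p.1 = a → q.1 = b → p.2 ≠ q.2 := by
    simp only [Set.disjoint_left, mem_col]
    grind
  have hlink : (∀ p ∈ col R a, ∀ p' ∈ col R a, ∀ q ∈ col R b, ∀ q' ∈ col R b,
      ¬((p < q ∧ q < p' ∧ p' < q') ∨ (q < p ∧ p < q' ∧ q' < p'))) ↔ NoInterleaveV R a b := by
    simp only [NoInterleaveV, mem_col]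
    grind
  rw [← hneighbors, ← hdisjoint, ← hlink, ← Unlinked]
  have hmem : ∀ x, (∃ p ∈ R, p.1 = x) ↔ x ∈ cols R := by simp [cols]
  rw [hmem, hmem]
  exact ⟨fun h ↦ ⟨h.ne, h.left_mem, h.right_mem, h.neighbors, h.unlinked⟩,
    fun ⟨hne, ha, hb, hn, hu⟩ ↦ ⟨hne, ha, hb, hn, hu⟩⟩

lemma isColCycle_transpose_iff (hR : IsDiagram R) :
    IsColCycle (transpose R) a b ↔ (∃ p ∈ R, p.2 = a) ∧
      (((∀ p ∈ R, a ≤ p.2) ∧ ∀ p ∈ R, p.2 ≠ a → p.2 < b) ∨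
        ((∀ p ∈ R, p.2 ≤ a) ∧ ∀ p ∈ R, p.2 ≠ a → b < p.2)) := by
  rw [isColCycle_iff hR.transpose]
  simp only [transpose, Finset.exists_mem_image, Finset.forall_mem_image, Prod.fst_swap]

lemma isColSwap_transpose_iff : IsColSwap (transpose R) a b ↔
    a ≠ b ∧ (∃ p ∈ R, p.2 = a) ∧ (∃ p ∈ R, p.2 = b) ∧
      (∀ p ∈ R, ¬(min a b < p.2 ∧ p.2 < max a b)) ∧
      (∀ p ∈ R, ∀ q ∈ R, p.2 = a → q.2 = b → p.1 ≠ q.1) ∧ NoInterleaveH R a b := by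
  rw [isColSwap_iff]
  simp only [transpose, NoInterleaveV, NoInterleaveH, Finset.exists_mem_image,
    Finset.forall_mem_image, Prod.fst_swap, Prod.snd_swap]

lemma transpose_inj : transpose R = transpose S ↔ R = S :=
  (Finset.image_injective Prod.swap_injective).eq_iff

lemma ExchangeMove.colExchange (h : ExchangeMove R R') :
    ColExchange R R' ∨ ColExchange (transpose R) (transpose R') := by
  rcases h with ⟨hR, -, -, ⟨a, b, ha, hb, rfl⟩ | ⟨a, b, ha, hb, rfl⟩, rfl⟩ |
    ⟨hR, -, -, ⟨a, b, hne, ha, hb, hn, hd, hl, rfl⟩ | ⟨a, b, hne, ha, hb, hn, hd, hl, rfl⟩, rfl⟩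
  · have hab := (isColCycle_iff hR).2 ⟨ha, hb⟩
    exact .inl ⟨hR, a, b, .inl hab, image_vmap hab.notMem⟩
  · have hab := (isColCycle_transpose_iff hR).2 ⟨ha, hb⟩
    exact .inr ⟨hR.transpose, a, b, .inl hab, transpose_image_hmap.trans (image_vmap hab.notMem)⟩
  · exact .inl ⟨hR, a, b, .inr (isColSwap_iff.2 ⟨hne, ha, hb, hn, hd, hl⟩), image_swapv⟩
  · exact .inr ⟨hR.transpose, a, b, .inr (isColSwap_transpose_iff.2 ⟨hne, ha, hb, hn, hd, hl⟩),
      transpose_image_swaph.trans image_swapv⟩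

lemma ColExchange.isDiagram (h : ColExchange R R') : IsDiagram R' := by
  obtain ⟨hR, a, b, -, rfl⟩ := h
  exact hR.relabelCols_swap a b

lemma ColExchange.exchangeMove (h : ColExchange R R') : ExchangeMove R R' := by
  have hR' := h.isDiagram
  obtain ⟨hR, a, b, hab | hab, rfl⟩ := h
  · obtain ⟨ha, hb⟩ := (isColCycle_iff hR).1 hab
    exact .inl ⟨hR, hR', _, .inl ⟨a, b, ha, hb, rfl⟩, (image_vmap hab.notMem).symm⟩
  · obtain ⟨hne, ha, hb, hn, hd, hl⟩ := isColSwap_iff.1 hab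
    exact .inr ⟨hR, hR', _, .inl ⟨a, b, hne, ha, hb, hn, hd, hl, rfl⟩, image_swapv.symm⟩

lemma ColExchange.exchangeMove_of_transpose (h : ColExchange (transpose R) (transpose R')) :
    ExchangeMove R R' := by
  have hR' : IsDiagram R' := by simpa using h.isDiagram.transpose
  obtain ⟨hRt, a, b, hab | hab, h⟩ := h <;> have hR : IsDiagram R := by simpa using hRt.transpose
  · obtain ⟨ha, hb⟩ := (isColCycle_transpose_iff hR).1 hab
    refine .inl ⟨hR, hR', _, .inr ⟨a, b, ha, hb, rfl⟩, ?_⟩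
    rw [← transpose_inj, h, transpose_image_hmap, image_vmap hab.notMem]
  · obtain ⟨hne, ha, hb, hn, hd, hl⟩ := isColSwap_transpose_iff.1 hab
    refine .inr ⟨hR, hR', _, .inr ⟨a, b, hne, ha, hb, hn, hd, hl, rfl⟩, ?_⟩
    rw [← transpose_inj, h, transpose_image_swaph, image_swapv]

lemma exchangeMove_iff :
    ExchangeMove R R' ↔ ColExchange R R' ∨ ColExchange (transpose R) (transpose R') :=
  ⟨ExchangeMove.colExchange, fun h ↦ h.elim (·.exchangeMove) (·.exchangeMove_of_transpose)⟩

namespace ExchangeMove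

protected lemma symm (h : ExchangeMove R R') : ExchangeMove R' R := by
  rw [exchangeMove_iff] at h ⊢
  exact h.imp ColExchange.symm ColExchange.symm

protected lemma transpose (h : ExchangeMove R R') :
    ExchangeMove (transpose R) (transpose R') := by
  rw [exchangeMove_iff] at h ⊢
  simpa using h.symm

end ExchangeMove

/-- Two diagrams are connected by a sequence of cyclic permutations and commutations. -/
abbrev ExchangeEquiv : Finset Pt → Finset Pt → Prop := Relation.ReflTransGen ExchangeMove

namespace ExchangeEquiv

protected lemma symm (h : ExchangeEquiv R R') : ExchangeEquiv R' R := by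
  induction h with
  | refl => exact .refl
  | tail _ hmove ih => exact .head hmove.symm ih

protected lemma transpose (h : ExchangeEquiv R R') :
    ExchangeEquiv (transpose R) (transpose R') := by
  induction h with
  | refl => exact .refl
  | tail _ hmove ih => exact ih.tail hmove.transpose

end ExchangeEquiv

lemma IsColCycle.exchangeEquiv (hR : IsDiagram R) (h : IsColCycle R a b) :
    ExchangeEquiv R (relabelCols (Equiv.swap a b) R) :=
  .single (ColExchange.exchangeMove ⟨hR, a, b, .inl h, rfl⟩)

lemma IsColSwap.exchangeEquiv (hR : IsDiagram R) (h : IsColSwap R a b) :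
    ExchangeEquiv R (relabelCols (Equiv.swap a b) R) :=
  .single (ColExchange.exchangeMove ⟨hR, a, b, .inr h, rfl⟩)

end ExchangeMoves

/-! ### Sliding columns -/

section Sliding

variable {R : Finset Pt} {g : ℝ → ℝ} {x₀ x₁ a b c : ℝ}

lemma injOn_piecewise_id {F s : Finset ℝ} (hg : Set.InjOn g F)
    (hlt : ∀ c ∈ F, ∀ d ∈ F, c < g d) : Set.InjOn (s.piecewise g id) F := by
  intro c hc d hd hcd
  have := hg hc hd
  have := hlt c hc d hd
  have := hlt d hd c hc
  by_cases hcs : c ∈ s <;> by_cases hds : d ∈ s <;>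
    simp only [hcs, hds, Finset.piecewise_eq_of_mem, Finset.piecewise_eq_of_notMem, id,
      not_false_eq_true] at hcd <;> grind

lemma isColCycle_relabelCols_piecewise {s : Finset ℝ} (hg : StrictMonoOn g (cols R))
    (hlt : ∀ c ∈ cols R, ∀ d ∈ cols R, c < g d) (ha : a ∈ cols R)
    (hs : ∀ c ∈ cols R, c ∈ s ↔ c < a) :
    IsColCycle (relabelCols (s.piecewise g id) R) a (g a) := by
  have has : a ∉ s := fun h ↦ ((hs a ha).1 h).false
  constructor
  · rw [cols_relabelCols]
    exact Finset.mem_image.2 ⟨a, ha, s.piecewise_eq_of_notMem g id has⟩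
  · left
    simp only [cols_relabelCols, Finset.forall_mem_image]
    intro c hc
    by_cases hcs : c ∈ s
    · rw [s.piecewise_eq_of_mem g id hcs]
      exact ⟨(hlt a ha c hc).le, hg hc ha ((hs c hc).1 hcs)⟩
    · rw [s.piecewise_eq_of_notMem g id hcs]
      exact ⟨not_lt.1 fun hca ↦ hcs ((hs c hc).2 hca), hlt c hc a ha⟩

lemma piecewise_insert_eq_swap {F s : Finset ℝ} (hg : Set.InjOn g F)
    (hlt : ∀ c ∈ F, ∀ d ∈ F, c < g d) (ha : a ∈ F) (has : a ∉ s) :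
    Set.EqOn ((insert a s).piecewise g id) (Equiv.swap a (g a) ∘ s.piecewise g id) F := by
  intro c hc
  have hinj := injOn_piecewise_id (s := s) hg hlt hc ha
  have hfa : s.piecewise g id a = a := s.piecewise_eq_of_notMem g id has
  rw [Finset.piecewise_insert, Function.comp_apply]
  by_cases hca : c = a
  · rw [hca, Function.update_self, hfa, Equiv.swap_apply_left]
  · rw [Function.update_of_ne hca,
      Equiv.swap_apply_of_ne_of_ne fun h ↦ hca (hinj (h.trans hfa.symm))]
    by_cases hcs : c ∈ s
    · simpa [hcs] using hg.ne hc ha hca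
    · simpa [hcs] using (hlt c hc a ha).ne

/-- A sufficiently distant copy of the diagram is reached by moving the columns there one by one,
starting with the leftmost one. -/
lemma exchangeEquiv_relabelCols_of_forall_lt (hR : IsDiagram R)
    (hg : StrictMonoOn g (cols R)) (hlt : ∀ c ∈ cols R, ∀ d ∈ cols R, c < g d) :
    ExchangeEquiv R (relabelCols g R) := by
  suffices h : ∀ s ⊆ cols R, (∀ a ∈ s, ∀ c ∈ cols R, c < a → c ∈ s) →
      ExchangeEquiv R (relabelCols (s.piecewise g id) R) by
    have := h (cols R) subset_rfl fun _ _ c hc _ ↦ hc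
    rwa [relabelCols_congr fun c hc ↦ Finset.piecewise_eq_of_mem _ g id hc] at this
  intro s
  induction s using Finset.induction_on_max with
  | empty =>
    intro _ _
    rw [Finset.piecewise_empty, relabelCols_eq_self fun _ _ ↦ rfl]
  | insert a s ha ih =>
    intro hs hlower
    have haR : a ∈ cols R := hs (Finset.mem_insert_self a s)
    have hcycle := isColCycle_relabelCols_piecewise (s := s) hg hlt haR (by grind)
    rw [relabelCols_congr (piecewise_insert_eq_swap hg.injOn hlt haR fun h ↦ (ha a h).false),
      ← relabelCols_relabelCols]
    exact (ih (by grind) (by grind)).trans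
      (hcycle.exchangeEquiv (hR.relabelCols (injOn_piecewise_id hg.injOn hlt)))

/-- Both diagrams share a sufficiently distant copy. -/
lemma exchangeEquiv_relabelCols (hR : IsDiagram R) (hg : StrictMonoOn g (cols R)) :
    ExchangeEquiv R (relabelCols g R) := by
  obtain ⟨K, hK⟩ : ∃ K, ∀ u ∈ cols R ∪ (cols R).image g, ∀ v ∈ (cols R).image g, u < v + K := by
    obtain ⟨K, hK⟩ := ((cols R ∪ (cols R).image g) ×ˢ (cols R).image g).image
      (fun p ↦ p.1 - p.2) |>.bddAbove
    refine ⟨K + 1, fun u hu v hv ↦ ?_⟩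
    have := hK (Finset.mem_image_of_mem _ (Finset.mk_mem_product hu hv))
    dsimp only at this
    linarith
  have hgK : StrictMonoOn (fun c ↦ g c + K) (cols R) := fun c hc d hd hcd ↦ by
    simpa using hg hc hd hcd
  refine (exchangeEquiv_relabelCols_of_forall_lt hR hgK ?_).trans (ExchangeEquiv.symm ?_)
  · exact fun c hc d hd ↦ hK c (Finset.mem_union_left _ hc) _ (Finset.mem_image_of_mem g hd)
  · have := exchangeEquiv_relabelCols_of_forall_lt (g := (· + K)) (hR.relabelCols hg.injOn)
      (add_left_strictMono.strictMonoOn _) (by rw [cols_relabelCols]; grind)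
    rwa [relabelCols_relabelCols] at this

lemma SameGap.exchangeEquiv (h : SameGap (cols R) a b) (hR : IsDiagram R) :
    ExchangeEquiv R (relabelCols (Equiv.swap a b) R) :=
  exchangeEquiv_relabelCols hR h.strictMonoOn_swap

lemma relabelCols_swap_conj (R : Finset Pt) (hab : a ≠ b) (hbc : b ≠ c) :
    relabelCols (Equiv.swap a c) (relabelCols (Equiv.swap c b) (relabelCols (Equiv.swap a c) R)) =
      relabelCols (Equiv.swap a b) R := by
  rw [relabelCols_relabelCols, relabelCols_relabelCols, ← Equiv.Perm.coe_mul,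
    ← Equiv.Perm.coe_mul, Equiv.swap_comm a c, Equiv.swap_comm c b,
    Equiv.swap_mul_swap_mul_swap hbc hab.symm]

/-- The first column obstructing the move is exchanged with the moving one by a commutation;
the moving column travels on from there, and the obstructing one returns to its place. -/
lemma exchangeEquiv_slide (hR : IsDiagram R) (h₀ : x₀ ∈ cols R) (h₁ : x₁ ∉ cols R)
    (hfree : ∀ c ∈ cols R, c ≠ x₀ → ¬(c < x₀ ↔ c < x₁) → Unlinked (col R x₀) (col R c)) :
    ExchangeEquiv R (relabelCols (Equiv.swap x₀ x₁) R) := by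
  induction hn : ((cols R).filter fun c ↦ c ≠ x₀ ∧ ¬(c < x₀ ↔ c < x₁)).card
    using Nat.strong_induction_on generalizing R x₀ with
  | _ n ih =>
  by_cases hgap : SameGap (cols R) x₀ x₁
  · exact hgap.exchangeEquiv hR
  obtain ⟨c, hcR, hc₀, hcsep, hnear⟩ := exists_neighbor_of_not_sameGap h₁ hgap
  have hc₁ : c ≠ x₁ := fun h ↦ h₁ (h ▸ hcR)
  have h₀₁ : x₀ ≠ x₁ := fun h ↦ h₁ (h ▸ h₀)
  have hcols := cols_relabelCols_swap h₀ hcR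
  have hcard : ((cols (relabelCols (Equiv.swap x₀ c) R)).filter fun d ↦
      d ≠ c ∧ ¬(d < c ↔ d < x₁)).card < n := by
    rw [← hn, hcols]
    refine Finset.card_lt_card ((Finset.ssubset_iff_of_subset fun d ↦ ?_).2 ⟨c, ?_⟩) <;> grind
  have hfree' : ∀ d ∈ cols (relabelCols (Equiv.swap x₀ c) R), d ≠ c → ¬(d < c ↔ d < x₁) →
      Unlinked (col (relabelCols (Equiv.swap x₀ c) R) c)
        (col (relabelCols (Equiv.swap x₀ c) R) d) := by
    intro d hd hdc hdsep
    have hd₀ : d ≠ x₀ := by grind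
    simp only [col_relabelCols_swap, Equiv.swap_apply_right, Equiv.swap_apply_of_ne_of_ne hd₀ hdc]
    exact hfree d (hcols ▸ hd) hd₀ (by grind)
  have hslide := ih _ hcard (hR.relabelCols_swap x₀ c) (hcols ▸ hcR) (hcols ▸ h₁) hfree' rfl
  have hback : SameGap (cols (relabelCols (Equiv.swap c x₁) (relabelCols (Equiv.swap x₀ c) R)))
      x₀ c := by
    intro d
    rw [mem_cols_relabelCols_swap, hcols, Equiv.swap_apply_def]
    grind
  have hswap : IsColSwap R x₀ c := ⟨hc₀.symm, h₀, hcR, hnear, hfree c hcR hc₀ hcsep⟩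
  rw [← relabelCols_swap_conj R h₀₁ hc₁.symm]
  exact ((hswap.exchangeEquiv hR).trans hslide).trans <| hback.exchangeEquiv
    ((hR.relabelCols_swap x₀ c).relabelCols_swap c x₁)

lemma relabelCols_swap_relabelCols_swap (hb : b ∉ cols R) (hc : c ∉ cols R) :
    relabelCols (Equiv.swap b c) (relabelCols (Equiv.swap a b) R) =
      relabelCols (Equiv.swap a c) R := by
  rw [relabelCols_relabelCols]
  refine relabelCols_congr fun r hr ↦ ?_
  simp only [Function.comp_apply, Equiv.swap_apply_def]
  grind

lemma exchangeEquiv_slide_around {u v : ℝ} (hR : IsDiagram R) (h₀ : x₀ ∈ cols R) (h₁ : x₁ ∉ cols R)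
    (huv : (∀ c ∈ insert x₁ (cols R), u < c ∧ c < v) ∨ ∀ c ∈ insert x₁ (cols R), v < c ∧ c < u)
    (hfree : ∀ c ∈ cols R, c ≠ x₀ → ¬(c < x₀ ↔ c < u) ∨ ¬(c < x₁ ↔ c < v) →
      Unlinked (col R x₀) (col R c)) :
    ExchangeEquiv R (relabelCols (Equiv.swap x₀ x₁) R) := by
  have hu : u ∉ cols R := fun h ↦ by grind
  have hv : v ∉ cols R := fun h ↦ by grind
  have hleave : ExchangeEquiv R (relabelCols (Equiv.swap x₀ u) R) :=
    exchangeEquiv_slide hR h₀ hu fun c hc hc₀ hsep ↦ hfree c hc hc₀ (.inl hsep)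
  have hcycle : IsColCycle (relabelCols (Equiv.swap x₀ u) R) u v := by
    refine ⟨by rwa [mem_cols_relabelCols_swap, Equiv.swap_apply_right], ?_⟩
    simp only [mem_cols_relabelCols_swap, Equiv.swap_apply_def]
    exact huv.imp (fun h c hc ↦ by grind) (fun h c hc ↦ by grind)
  have hreturn : ExchangeEquiv (relabelCols (Equiv.swap x₀ x₁) R)
      (relabelCols (Equiv.swap x₁ v) (relabelCols (Equiv.swap x₀ x₁) R)) := by
    refine exchangeEquiv_slide (hR.relabelCols_swap x₀ x₁) ?_ ?_ fun c hc hc₁ hsep ↦ ?_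
    · rwa [mem_cols_relabelCols_swap, Equiv.swap_apply_right]
    · rw [mem_cols_relabelCols_swap, Equiv.swap_apply_def]
      grind
    · rw [mem_cols_relabelCols_swap, Equiv.swap_apply_def] at hc
      have hc₀ : c ≠ x₀ := by grind
      rw [col_relabelCols_swap, col_relabelCols_swap, Equiv.swap_apply_right,
        Equiv.swap_apply_of_ne_of_ne hc₀ hc₁]
      exact hfree c (by grind) hc₀ (.inr hsep)
  rw [relabelCols_swap_relabelCols_swap h₁ hv] at hreturn
  have hcycle' := hcycle.exchangeEquiv (hR.relabelCols_swap x₀ u)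
  rw [relabelCols_swap_relabelCols_swap hu hv] at hcycle'
  exact (hleave.trans hcycle').trans hreturn.symm

lemma exchangeEquiv_slide_outside (hR : IsDiagram R) (h₀ : x₀ ∈ cols R) (h₁ : x₁ ∉ cols R)
    (hfree : ∀ c ∈ cols R, c ≠ x₀ → (c < x₀ ↔ c < x₁) → Unlinked (col R x₀) (col R c)) :
    ExchangeEquiv R (relabelCols (Equiv.swap x₀ x₁) R) := by
  obtain ⟨lo, -, hlo⟩ := Order.exists_between_finsets ∅ (insert x₁ (cols R)) (by simp)
  obtain ⟨hi, hhi, -⟩ := Order.exists_between_finsets (insert x₁ (cols R)) ∅ (by simp)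
  have := Finset.mem_insert_self x₁ (cols R)
  rcases lt_or_ge x₀ x₁ with h | h
  · refine exchangeEquiv_slide_around hR h₀ h₁ (.inl fun c hc ↦ ⟨hlo c hc, hhi c hc⟩) ?_
    exact fun c hc hc₀ hsep ↦ hfree c hc hc₀ (by grind)
  · refine exchangeEquiv_slide_around hR h₀ h₁ (.inr fun c hc ↦ ⟨hlo c hc, hhi c hc⟩) ?_
    exact fun c hc hc₀ hsep ↦ hfree c hc hc₀ (by grind)

end Sliding

/-! ### Stabilizations -/

section Stabilizations

variable {R R' : Finset Pt} {x y x' y' a : ℝ} {t : StabType}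

/-- The vertex `(x, y)` of `R` can be stabilized using the new column `x'` and the new row `y'`. -/
structure IsStabSite (R : Finset Pt) (x y x' y' : ℝ) : Prop where
  mem : (x, y) ∈ R
  col_ne : x ≠ x'
  row_ne : y ≠ y'
  col_gap : SameGap (cols R) x x'
  row_gap : SameGap (rows R) y y'

/-- The type of a stabilization at `(x, y)` with new column `x'` and new row `y'`. -/
def squareType (x y x' y' : ℝ) : StabType := if x < x' ↔ y < y' then .I else .II

lemma squareType_swap (x y x' y' : ℝ) : squareType y x y' x' = squareType x y x' y' := by
  simp only [squareType, iff_comm]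

lemma mem_stabSet {p q : ℝ} : (p, q) ∈ stabSet x y x' y' R ↔
    (p = x' ∧ q = y) ∨ (p = x ∧ q = y') ∨ (p = x' ∧ q = y') ∨ (¬(p = x ∧ q = y) ∧ (p, q) ∈ R) := by
  simp [stabSet]

lemma transpose_stabSet (R : Finset Pt) (x y x' y' : ℝ) :
    transpose (stabSet x y x' y' R) = stabSet y x y' x' (transpose R) := by
  ext ⟨p, q⟩
  simp only [mem_transpose, mem_stabSet]
  grind

lemma cols_stabSet (h : (x, y) ∈ R) : cols (stabSet x y x' y' R) = insert x' (cols R) := by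
  ext p
  simp only [mem_cols, mem_stabSet, Finset.mem_insert]
  constructor
  · grind
  · rintro (rfl | ⟨q, hq⟩)
    · exact ⟨y, .inl ⟨rfl, rfl⟩⟩
    · by_cases hpx : p = x
      · exact ⟨y', .inr (.inl ⟨hpx, rfl⟩)⟩
      · exact ⟨q, by simp [hpx, hq]⟩

lemma rows_stabSet (h : (x, y) ∈ R) : rows (stabSet x y x' y' R) = insert y' (rows R) := by
  rw [← cols_transpose, transpose_stabSet, cols_stabSet (mem_transpose.2 h), cols_transpose]

namespace IsStabSite

protected lemma transpose (h : IsStabSite R x y x' y') : IsStabSite (transpose R) y x y' x' :=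
  ⟨mem_transpose.2 h.mem, h.row_ne, h.col_ne, (cols_transpose R).symm ▸ h.row_gap,
    (rows_transpose R).symm ▸ h.col_gap⟩

lemma mem_cols (h : IsStabSite R x y x' y') : x ∈ cols R := mem_cols_of_mem h.mem

lemma mem_rows (h : IsStabSite R x y x' y') : y ∈ rows R := mem_rows_of_mem h.mem

lemma notMem_cols (h : IsStabSite R x y x' y') : x' ∉ cols R := h.col_gap.notMem h.col_ne

lemma notMem_rows (h : IsStabSite R x y x' y') : y' ∉ rows R := h.row_gap.notMem h.row_ne

lemma notMem_of_col (h : IsStabSite R x y x' y') (q : ℝ) : (x', q) ∉ R :=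
  fun hq ↦ h.notMem_cols (mem_cols_of_mem hq)

lemma notMem_of_row (h : IsStabSite R x y x' y') (p : ℝ) : (p, y') ∉ R :=
  fun hp ↦ h.notMem_rows (mem_rows_of_mem hp)

lemma col_stabSet_right (h : IsStabSite R x y x' y') :
    col (stabSet x y x' y' R) x' = {y, y'} := by
  ext q
  have := h.notMem_of_col q
  have := h.col_ne
  simp only [mem_col, mem_stabSet, Set.mem_insert_iff, Set.mem_singleton_iff]
  grind

lemma col_stabSet_left (h : IsStabSite R x y x' y') :
    col (stabSet x y x' y' R) x = insert y' (col R x \ {y}) := by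
  ext q
  have := h.col_ne
  simp only [mem_col, mem_stabSet, Set.mem_insert_iff, Set.mem_sdiff, Set.mem_singleton_iff]
  grind

lemma col_stabSet_of_ne (hx : a ≠ x) (hx' : a ≠ x') :
    col (stabSet x y x' y' R) a = col R a := by
  ext q
  simp only [mem_col, mem_stabSet]
  grind

lemma pairedCols_stabSet (h : IsStabSite R x y x' y') (hR : PairedCols R) :
    PairedCols (stabSet x y x' y' R) := by
  intro a ha
  rw [cols_stabSet h.mem, Finset.mem_insert] at ha
  by_cases hax' : a = x'
  · rw [hax', h.col_stabSet_right, Set.ncard_pair h.row_ne]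
  by_cases hax : a = x
  · have hcol := hR x h.mem_cols
    have hfin : (col R x).Finite := Set.finite_of_ncard_ne_zero (by simp [hcol])
    rw [hax, h.col_stabSet_left, Set.ncard_insert_of_notMem (fun hy ↦ h.notMem_of_row x hy.1)
      hfin.sdiff, Set.ncard_sdiff_singleton_of_mem (mem_col.2 h.mem), hcol]
  · rw [col_stabSet_of_ne hax hax', hR a (by grind)]

lemma isDiagram_stabSet (h : IsStabSite R x y x' y') (hR : IsDiagram R) :
    IsDiagram (stabSet x y x' y' R) := by
  rw [isDiagram_iff, transpose_stabSet]
  exact ⟨h.pairedCols_stabSet (isDiagram_iff.1 hR).1,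
    h.transpose.pairedCols_stabSet (isDiagram_iff.1 hR).2⟩

end IsStabSite

lemma sameGap_cols_iff (hx : x ≠ x') : SameGap (cols R) x x' ↔
    (∀ p ∈ R, p.1 ≠ x') ∧ ∀ p ∈ R, ¬(min x x' < p.1 ∧ p.1 < max x x') := by
  rw [SameGap, cols, Finset.forall_mem_image, ← forall₂_and]
  refine forall₂_congr fun p _ ↦ ?_
  grind

lemma sameGap_rows_iff (hy : y ≠ y') : SameGap (rows R) y y' ↔
    (∀ p ∈ R, p.2 ≠ y') ∧ ∀ p ∈ R, ¬(min y y' < p.2 ∧ p.2 < max y y') := by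
  rw [SameGap, rows, Finset.forall_mem_image, ← forall₂_and]
  refine forall₂_congr fun p _ ↦ ?_
  grind

lemma stabData_iff :
    StabData x y x' y' R R' ↔ IsStabSite R x y x' y' ∧ R' = stabSet x y x' y' R := by
  constructor
  · rintro ⟨hmem, hx, hy, hx', hy', hxx', hyy', rfl⟩
    exact ⟨⟨hmem, hx, hy, (sameGap_cols_iff hx).2 ⟨hx', hxx'⟩,
      (sameGap_rows_iff hy).2 ⟨hy', hyy'⟩⟩, rfl⟩
  · rintro ⟨⟨hmem, hx, hy, hxx', hyy'⟩, rfl⟩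
    rw [sameGap_cols_iff hx] at hxx'
    rw [sameGap_rows_iff hy] at hyy'
    exact ⟨hmem, hx, hy, hxx'.1, hyy'.1, hxx'.2, hyy'.2, rfl⟩

lemma squareType_eq_iff (hx : x ≠ x') (hy : y ≠ y') :
    squareType x y x' y' = t ↔ (t = .I ↔ 0 < (x - x') * (y - y')) := by
  have hsign : 0 < (x - x') * (y - y') ↔ (x < x' ↔ y < y') := by
    rw [mul_pos_iff]
    grind
  rw [hsign, squareType]
  cases t <;> split_ifs <;> simp_all

lemma stabMove_iff : StabMove t R R' ↔ IsDiagram R ∧ ∃ x y x' y',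
    IsStabSite R x y x' y' ∧ squareType x y x' y' = t ∧ R' = stabSet x y x' y' R := by
  constructor
  · rintro ⟨⟨x, y⟩, hR, -, x', y', hdata, ht⟩
    obtain ⟨h, rfl⟩ := stabData_iff.1 hdata
    exact ⟨hR, x, y, x', y', h, (squareType_eq_iff h.col_ne h.row_ne).2 ht, rfl⟩
  · rintro ⟨hR, x, y, x', y', h, ht, rfl⟩
    exact ⟨(x, y), hR, h.isDiagram_stabSet hR, x', y', stabData_iff.2 ⟨h, rfl⟩,
      (squareType_eq_iff h.col_ne h.row_ne).1 ht⟩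

lemma IsStabSite.stabMove (h : IsStabSite R x y x' y') (hR : IsDiagram R) :
    StabMove (squareType x y x' y') R (stabSet x y x' y' R) :=
  stabMove_iff.2 ⟨hR, x, y, x', y', h, rfl, rfl⟩

protected lemma StabMove.transpose (h : StabMove t R R') :
    StabMove t (transpose R) (transpose R') := by
  obtain ⟨hR, x, y, x', y', hsite, rfl, rfl⟩ := stabMove_iff.1 h
  rw [← squareType_swap, transpose_stabSet]
  exact hsite.transpose.stabMove hR.transpose

end Stabilizations

/-! ### Sliding stabilizations -/

section SlidingStabilizations

variable {R S : Finset Pt} {x y x' y' x'' y'' a b c d a' b' c' b'' : ℝ} {t : StabType}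

lemma relabelCols_stabSet_right (hx : x ≠ x') (hx' : x' ∉ cols R) (hx'' : x'' ∉ cols R)
    (hmem : (x, y) ∈ R) :
    relabelCols (Equiv.swap x' x'') (stabSet x y x' y' R) = stabSet x y x'' y' R := by
  ext ⟨p, q⟩
  have h₁ : (x', q) ∉ R := fun h ↦ hx' (mem_cols_of_mem h)
  have h₂ : (x'', q) ∉ R := fun h ↦ hx'' (mem_cols_of_mem h)
  have h₃ : x ≠ x'' := fun h ↦ hx'' (h ▸ mem_cols_of_mem hmem)
  simp only [mem_relabelCols_swap, mem_stabSet, Equiv.swap_apply_def]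
  grind

lemma IsStabSite.exchangeEquiv_of_col (h : IsStabSite R x y x' y') (hR : IsDiagram R)
    (hx'' : x ≠ x'') (hgap : SameGap (cols R) x x'') (hside : x < x'' ↔ x < x') :
    ExchangeEquiv (stabSet x y x' y' R) (stabSet x y x'' y' R) := by
  have hgap' : SameGap (cols (stabSet x y x' y' R)) x' x'' := by
    rw [cols_stabSet h.mem]
    intro r hr hrx'
    have := h.col_ne
    have hr' := h.col_gap r
    have hr'' := hgap r
    grind
  rw [← relabelCols_stabSet_right h.col_ne h.notMem_cols (hgap.notMem hx'') h.mem]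
  exact hgap'.exchangeEquiv (h.isDiagram_stabSet hR)

lemma IsStabSite.exchangeEquiv_of_row (h : IsStabSite R x y x' y') (hR : IsDiagram R)
    (hy'' : y ≠ y'') (hgap : SameGap (rows R) y y'') (hside : y < y'' ↔ y < y') :
    ExchangeEquiv (stabSet x y x' y' R) (stabSet x y x' y'' R) := by
  rw [← cols_transpose] at hgap
  have := (h.transpose.exchangeEquiv_of_col hR.transpose hy'' hgap hside).transpose
  rwa [← transpose_stabSet, ← transpose_stabSet, transpose_transpose, transpose_transpose] at this

/-- Up to exchange moves, `S` arises from `R` by a stabilization of type `t` at the vertex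
`(x, y)`. -/
def StabEquivAt (t : StabType) (R S : Finset Pt) (x y : ℝ) : Prop :=
  ∃ x' y', IsStabSite R x y x' y' ∧ squareType x y x' y' = t ∧
    ExchangeEquiv S (stabSet x y x' y' R)

lemma StabMove.exists_stabEquivAt (h : StabMove t R S) : ∃ x y, StabEquivAt t R S x y := by
  obtain ⟨-, x, y, x', y', hsite, ht, rfl⟩ := stabMove_iff.1 h
  exact ⟨x, y, x', y', hsite, ht, .refl⟩

namespace StabEquivAt

protected lemma transpose (h : StabEquivAt t R S x y) :
    StabEquivAt t (transpose R) (transpose S) y x := by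
  obtain ⟨x', y', hsite, ht, hS⟩ := h
  exact ⟨y', x', hsite.transpose, (squareType_swap x y x' y').trans ht,
    transpose_stabSet R x y x' y' ▸ hS.transpose⟩

lemma exists_isStabSite (h : StabEquivAt t R S x y) (hR : IsDiagram R) (F G : Finset ℝ) :
    ∃ x' y', IsStabSite R x y x' y' ∧ squareType x y x' y' = t ∧
      SameGap F x x' ∧ SameGap G y y' ∧ ExchangeEquiv S (stabSet x y x' y' R) := by
  obtain ⟨x', y', hsite, rfl, hS⟩ := h
  obtain ⟨x'', hx, hgapx, hsidex⟩ := exists_sameGap (F ∪ cols R) x (x < x')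
  obtain ⟨y'', hy, hgapy, hsidey⟩ := exists_sameGap (G ∪ rows R) y (y < y')
  have hcol := hgapx.mono (Finset.subset_union_right (s₁ := F))
  have hrow := hgapy.mono (Finset.subset_union_right (s₁ := G))
  have hsite' : IsStabSite R x y x'' y' := ⟨hsite.mem, hx, hsite.row_ne, hcol, hsite.row_gap⟩
  refine ⟨x'', y'', ⟨hsite.mem, hx, hy, hcol, hrow⟩, ?_, hgapx.mono Finset.subset_union_left,
    hgapy.mono Finset.subset_union_left, ?_⟩
  · simp only [squareType, hsidex, hsidey]
  · exact (hS.trans (hsite.exchangeEquiv_of_col hR hx hcol hsidex)).trans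
      (hsite'.exchangeEquiv_of_row hR hy hrow hsidey)

end StabEquivAt

/-- No vertex separates the endpoints `b`, `b'` of the new edge, so it is linked with no
column other than `a` and `c`, and `hside` makes one of the two ways around from `a'` to `c'` avoid
both of these. -/
lemma IsStabSite.exchangeEquiv_slide_short (h : IsStabSite R a b a' b') (hR : IsDiagram R)
    (hc : (c, b) ∈ R) (hca : c ≠ a) (hc' : c ≠ c') (hgap : SameGap (insert a' (cols R)) c c')
    (hside : c < c' ↔ ¬a < a') :
    ExchangeEquiv (stabSet a b a' b' R) (relabelCols (Equiv.swap a' c') (stabSet a b a' b' R)) := by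
  have hS := h.isDiagram_stabSet hR
  have hcols := cols_stabSet (x' := a') (y' := b') h.mem
  have ha' : a' ∈ cols (stabSet a b a' b' R) := by simp [hcols]
  have hfree : ∀ r ∈ cols (stabSet a b a' b' R), r ≠ a' → r ≠ a → r ≠ c →
      Unlinked (col (stabSet a b a' b' R) a') (col (stabSet a b a' b' R) r) := by
    intro r hr hra' hra hrc
    rw [h.col_stabSet_right, IsStabSite.col_stabSet_of_ne hra hra']
    refine unlinked_of_forall_lt_iff fun q hq ↦ ?_
    have hqb : q ≠ b := by
      rintro rfl
      have := hR.eq_or_eq_of_mem_row h.mem hc hq hca.symm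
      grind
    have := h.row_gap q (mem_rows_of_mem hq) hqb
    have := h.notMem_of_row r
    have := mem_col.1 hq
    simp only [Set.mem_insert_iff, Set.mem_singleton_iff]
    grind
  have hsame : (a < a' ↔ a < c') ↔ (c < a' ↔ c < c') := by
    have hac := hgap a (Finset.mem_insert_of_mem h.mem_cols) hca.symm
    have hca' := h.col_gap c (mem_cols_of_mem hc) hca
    have := h.col_ne
    grind
  by_cases hsep : a < a' ↔ a < c'
  · refine exchangeEquiv_slide hS ha' (hcols ▸ hgap.notMem hc') fun r hr hra' hr' ↦ ?_
    exact hfree r hr hra' (by grind) (by grind)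
  · refine exchangeEquiv_slide_outside hS ha' (hcols ▸ hgap.notMem hc') fun r hr hra' hr' ↦ ?_
    exact hfree r hr hra' (by grind) (by grind)

/-- After the slide, row `b'` joins `a` to `c'` and row `b` is a short edge joining `c'` to `c`.
Renaming `b'` to `b` and `b` to `b''` thus turns the diagram into a stabilization at `(c, b)`. -/
lemma IsStabSite.transpose_stabSet_slide (h : IsStabSite R a b a' b') (hR : IsDiagram R)
    (hc : (c, b) ∈ R) (hca : c ≠ a) (hc' : c' ∉ insert a' (cols R))
    (hb'' : b'' ∉ insert b' (rows R)) :
    relabelCols ⇑(Equiv.swap b b' * Equiv.swap b b'')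
        (transpose (relabelCols (Equiv.swap a' c') (stabSet a b a' b' R))) =
      transpose (stabSet c b c' b'' R) := by
  ext ⟨q, p⟩
  have hrow : ∀ r, (r, b) ∈ R → r = a ∨ r = c := fun r hr ↦
    hR.eq_or_eq_of_mem_row h.mem hc hr hca.symm
  have hcol : ∀ {r s}, (r, s) ∈ R → r ≠ a' ∧ r ≠ c' ∧ s ≠ b' ∧ s ≠ b'' := fun hrs ↦ by
    have := h.notMem_cols
    have := h.notMem_rows
    have := mem_cols_of_mem hrs
    have := mem_rows_of_mem hrs
    grind
  have hmem := h.mem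
  have hne : c' ≠ a' ∧ b'' ≠ b' ∧ b ≠ b' ∧ b ≠ b'' := by grind
  obtain ⟨u, hu⟩ : ∃ u, Equiv.swap a' c' p = u := ⟨_, rfl⟩
  obtain ⟨w, hw⟩ : ∃ w, Equiv.swap b b' q = w := ⟨_, rfl⟩
  obtain ⟨v, hv⟩ : ∃ v, Equiv.swap b b'' w = v := ⟨_, rfl⟩
  simp only [mem_relabelCols_perm, mem_transpose, mem_stabSet,
    ← Equiv.Perm.inv_def, mul_inv_rev, Equiv.swap_inv, Equiv.Perm.mul_apply, hu, hw, hv]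
  rw [Equiv.swap_apply_def] at hu hv hw
  have hu' : (p = a' ∧ u = c') ∨ (p = c' ∧ u = a') ∨ (p ≠ a' ∧ p ≠ c' ∧ u = p) := by
    clear hcol hrow
    grind
  have hv' : (q = b ∧ v = b') ∨ (q = b' ∧ v = b'') ∨ (q = b'' ∧ v = b) ∨
      (q ≠ b ∧ q ≠ b' ∧ q ≠ b'' ∧ v = q) := by
    clear hcol hrow hu
    split_ifs at hw hv <;> grind
  clear hu hw hv
  rcases hu' with ⟨rfl, rfl⟩ | ⟨rfl, rfl⟩ | ⟨hpa, hpc, rfl⟩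
  all_goals rcases hv' with ⟨rfl, rfl⟩ | ⟨rfl, rfl⟩ | ⟨rfl, rfl⟩ | ⟨hqb, hqb', hqb'', rfl⟩
  all_goals grind

namespace StabEquivAt

lemma slide_along_row (h : StabEquivAt t R S a b) (hR : IsDiagram R) (hc : (c, b) ∈ R) :
    StabEquivAt t R S c b := by
  by_cases hca : c = a
  · rwa [hca]
  obtain ⟨a', b', hsite, rfl, hS⟩ := h
  obtain ⟨c', hc', hgapc, hsidec⟩ := exists_sameGap (insert a' (cols R)) c (¬a < a')
  obtain ⟨b'', hb'', hgapb, hsideb⟩ := exists_sameGap (insert b' (rows R)) b (¬b < b')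
  have hslide := hsite.exchangeEquiv_slide_short hR hc hca hc' hgapc hsidec
  set T := relabelCols (Equiv.swap a' c') (stabSet a b a' b' R) with hT
  have hrows : cols (transpose T) = insert b' (rows R) := by
    rw [cols_transpose, hT, rows_relabelCols, rows_stabSet hsite.mem]
  have hmono : StrictMonoOn ⇑(Equiv.swap b b' * Equiv.swap b b'') (cols (transpose T)) :=
    hrows ▸ hsite.row_gap.strictMonoOn_swap_mul_swap hb'' hgapb hsideb
  have hT' : IsDiagram (transpose T) :=
    ((hsite.isDiagram_stabSet hR).relabelCols_swap a' c').transpose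
  have hshift := exchangeEquiv_relabelCols hT' hmono
  rw [hT, hsite.transpose_stabSet_slide hR hc hca (hgapc.notMem hc') (hgapb.notMem hb''),
    ← hT] at hshift
  refine ⟨c', b'', ⟨hc, hc', hb'', hgapc.mono (Finset.subset_insert _ _),
    hgapb.mono (Finset.subset_insert _ _)⟩, ?_, hS.trans (hslide.trans ?_)⟩
  · simp only [squareType, hsidec, hsideb, not_iff_not]
  · simpa only [transpose_transpose] using hshift.transpose

lemma slide_along_col (h : StabEquivAt t R S a b) (hR : IsDiagram R) (hd : (a, d) ∈ R) :
    StabEquivAt t R S a d := by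
  have := (h.transpose.slide_along_row hR.transpose (mem_transpose.2 hd)).transpose
  rwa [transpose_transpose, transpose_transpose] at this

lemma mem (h : StabEquivAt t R S x y) : (x, y) ∈ R := by
  obtain ⟨x', y', hsite, -⟩ := h
  exact hsite.mem

lemma exists_col_ne (h : StabEquivAt t R S a b) (hR : IsDiagram R) (x : ℝ) :
    ∃ c ≠ x, StabEquivAt t R S c b := by
  obtain ⟨c, hcx, hc⟩ := hR.exists_mem_row_ne h.mem x
  exact ⟨c, hcx, h.slide_along_row hR hc⟩

lemma exists_ne (h : StabEquivAt t R S a b) (hR : IsDiagram R) (x y : ℝ) :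
    ∃ c ≠ x, ∃ d ≠ y, StabEquivAt t R S c d := by
  obtain ⟨c, hcx, hc⟩ := h.exists_col_ne hR x
  obtain ⟨d, hdy, hd⟩ := hR.exists_mem_col_ne hc.mem y
  exact ⟨c, hcx, d, hdy, hc.slide_along_col hR hd⟩

end StabEquivAt

end SlidingStabilizations

/-! ### Commuting moves past stabilizations -/

section Commuting

variable {R R' S U : Finset Pt} {x y a b c d a' b' c' d' : ℝ} {s t : StabType}

lemma IsColCycle.stabSet (hab : IsColCycle R a b) (h : IsStabSite R c d c' d') (hca : c ≠ a)
    (hgap : SameGap {a, b} c c') : IsColCycle (stabSet c d c' d' R) a b := by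
  have hc := h.mem_cols
  have := hgap a (by simp) hca.symm
  have := hgap b (by simp) (fun hbc ↦ hab.notMem (hbc ▸ hc))
  refine ⟨?_, ?_⟩ <;> simp only [cols_stabSet h.mem, Finset.forall_mem_insert]
  · exact Finset.mem_insert_of_mem hab.mem
  · exact hab.extreme.imp (fun h ↦ by grind) (fun h ↦ by grind)

lemma IsColSwap.stabSet (hab : IsColSwap R a b) (h : IsStabSite R c d c' d') (hca : c ≠ a)
    (hcb : c ≠ b) : IsColSwap (stabSet c d c' d' R) a b := by
  have hc := hab.neighbors c h.mem_cols hca hcb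
  have ha := h.col_gap a hab.left_mem hca.symm
  have hb := h.col_gap b hab.right_mem hcb.symm
  have hac' : a ≠ c' := fun hac' ↦ h.notMem_cols (hac' ▸ hab.left_mem)
  have hbc' : b ≠ c' := fun hbc' ↦ h.notMem_cols (hbc' ▸ hab.right_mem)
  have hunlinked := hab.unlinked
  rw [← IsStabSite.col_stabSet_of_ne (y := d) (y' := d') hca.symm hac',
    ← IsStabSite.col_stabSet_of_ne (y := d) (y' := d') hcb.symm hbc'] at hunlinked
  have hneighbors := hab.neighbors
  refine ⟨hab.ne, ?_, ?_, ?_, hunlinked⟩ <;> rw [cols_stabSet h.mem]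
  · exact Finset.mem_insert_of_mem hab.left_mem
  · exact Finset.mem_insert_of_mem hab.right_mem
  · grind

lemma relabelCols_swap_stabSet (hca : c ≠ a) (hcb : c ≠ b) (hc'a : c' ≠ a) (hc'b : c' ≠ b) :
    relabelCols (Equiv.swap a b) (stabSet c d c' d' R) =
      stabSet c d c' d' (relabelCols (Equiv.swap a b) R) := by
  ext ⟨p, q⟩
  simp only [mem_relabelCols_swap, mem_stabSet, Equiv.swap_apply_def]
  grind

lemma IsStabSite.relabelCols_swap (h : IsStabSite R c d c' d') (hca : c ≠ a) (hcb : c ≠ b)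
    (hgap : SameGap {a, b} c c') :
    IsStabSite (relabelCols (Equiv.swap a b) R) c d c' d' := by
  refine ⟨?_, h.col_ne, h.row_ne, ?_, ?_⟩
  · rw [mem_relabelCols_swap, Equiv.swap_apply_of_ne_of_ne hca hcb]
    exact h.mem
  · intro r hr
    rw [mem_cols_relabelCols_swap] at hr
    have := hgap r
    have := h.col_gap r
    grind
  · rw [rows_relabelCols]
    exact h.row_gap

lemma IsColCycle.notMem_or_notMem (h : IsColCycle R a b) (y : ℝ) : (a, y) ∉ R ∨ (b, y) ∉ R :=
  .inr fun hb ↦ h.notMem (mem_cols_of_mem hb)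

lemma IsColSwap.notMem_or_notMem (h : IsColSwap R a b) (y : ℝ) : (a, y) ∉ R ∨ (b, y) ∉ R :=
  not_and_or.1 fun hy ↦ Set.disjoint_left.1 h.unlinked.1 (mem_col.2 hy.1) (mem_col.2 hy.2)

lemma StabEquivAt.exists_col_ne_of_notMem (h : StabEquivAt t R S x y) (hR : IsDiagram R)
    (hab : (a, y) ∉ R ∨ (b, y) ∉ R) : ∃ c, c ≠ a ∧ c ≠ b ∧ StabEquivAt t R S c y := by
  rcases hab with ha | hb
  · obtain ⟨c, hcb, hc⟩ := h.exists_col_ne hR b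
    exact ⟨c, fun hca ↦ ha (hca ▸ hc.mem), hcb, hc⟩
  · obtain ⟨c, hca, hc⟩ := h.exists_col_ne hR a
    exact ⟨c, hca, fun hcb ↦ hb (hcb ▸ hc.mem), hc⟩

lemma StabMove.exists_of_colExchange (h : StabMove t R S) (hex : ColExchange R R') :
    ∃ S', StabMove t R' S' ∧ ExchangeEquiv S S' := by
  obtain ⟨hR, a, b, hab, rfl⟩ := hex
  obtain ⟨x, d, hxd⟩ := h.exists_stabEquivAt
  obtain ⟨c, hca, hcb, hcd⟩ := hxd.exists_col_ne_of_notMem hR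
    (hab.elim (·.notMem_or_notMem d) (·.notMem_or_notMem d))
  obtain ⟨c', d', hsite, rfl, hgap, -, hS⟩ := hcd.exists_isStabSite hR {a, b} ∅
  have hc' := hgap.notMem hsite.col_ne
  rw [Finset.mem_insert, Finset.mem_singleton, not_or] at hc'
  have hex : ColExchange (stabSet c d c' d' R)
      (stabSet c d c' d' (relabelCols (Equiv.swap a b) R)) :=
    ⟨hsite.isDiagram_stabSet hR, a, b,
      hab.imp (·.stabSet hsite hca hgap) (·.stabSet hsite hca hcb),
      (relabelCols_swap_stabSet hca hcb hc'.1 hc'.2).symm⟩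
  exact ⟨_, (hsite.relabelCols_swap hca hcb hgap).stabMove (hR.relabelCols_swap a b),
    hS.tail hex.exchangeMove⟩

lemma StabMove.exists_of_exchangeMove (h : StabMove t R S) (hex : ExchangeMove R R') :
    ∃ S', StabMove t R' S' ∧ ExchangeEquiv S S' := by
  rcases exchangeMove_iff.1 hex with hex | hex
  · exact h.exists_of_colExchange hex
  · obtain ⟨S', hS', hSS'⟩ := h.transpose.exists_of_colExchange hex
    refine ⟨transpose S', ?_, ?_⟩
    · simpa only [transpose_transpose] using hS'.transpose
    · simpa only [transpose_transpose] using hSS'.transpose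

lemma StabMove.exists_of_exchangeEquiv (h : StabMove t R S) (hex : ExchangeEquiv R R') :
    ∃ S', StabMove t R' S' ∧ ExchangeEquiv S S' := by
  induction hex with
  | refl => exact ⟨S, h, .refl⟩
  | tail _ hmove ih =>
    obtain ⟨S₁, hS₁, hSS₁⟩ := ih
    obtain ⟨S₂, hS₂, hS₁S₂⟩ := hS₁.exists_of_exchangeMove hmove
    exact ⟨S₂, hS₂, hSS₁.trans hS₁S₂⟩

lemma stabSet_comm (hac : a ≠ c) (hac' : a ≠ c') (hca' : c ≠ a') :
    stabSet a b a' b' (stabSet c d c' d' R) = stabSet c d c' d' (stabSet a b a' b' R) := by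
  ext ⟨p, q⟩
  simp only [mem_stabSet]
  grind

lemma IsStabSite.stabSet (h : IsStabSite R a b a' b') (hac : a ≠ c) (hcd : (c, d) ∈ R)
    (hcol : SameGap (insert c' (cols R)) a a') (hrow : SameGap (insert d' (rows R)) b b') :
    IsStabSite (stabSet c d c' d' R) a b a' b' := by
  refine ⟨?_, h.col_ne, h.row_ne, cols_stabSet hcd ▸ hcol, rows_stabSet hcd ▸ hrow⟩
  rw [mem_stabSet]
  grind [h.mem]

lemma StabMove.exists_of_stabMove (hs : StabMove s R S) (ht : StabMove t R U) :
    ∃ V V', StabMove t S V ∧ ExchangeEquiv V V' ∧ StabMove s U V' := by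
  obtain ⟨hR, c, d, c', d', hcd, rfl, rfl⟩ := stabMove_iff.1 hs
  obtain ⟨x, y, hxy⟩ := ht.exists_stabEquivAt
  obtain ⟨a, hac, b, hbd, habU⟩ := hxy.exists_ne hR c d
  obtain ⟨a', b', hab, rfl, hcol, hrow, hU⟩ :=
    habU.exists_isStabSite hR (insert c' (cols R)) (insert d' (rows R))
  have hac' : a ≠ c' := fun h ↦ hcd.notMem_cols (h ▸ hab.mem_cols)
  have hca' : c ≠ a' := fun h ↦ hab.notMem_cols (h ▸ hcd.mem_cols)
  have hab' := hab.stabSet hac hcd.mem hcol hrow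
  have hcd' := hcd.stabSet hac.symm hab.mem
    (hcol.insert_of_insert hcd.col_gap hab.mem_cols hcd.mem_cols hac hcd.notMem_cols)
    (hrow.insert_of_insert hcd.row_gap hab.mem_rows hcd.mem_rows hbd hcd.notMem_rows)
  obtain ⟨V', hV', hVV'⟩ :=
    (hcd'.stabMove (hab.isDiagram_stabSet hR)).exists_of_exchangeEquiv hU.symm
  refine ⟨_, V', hab'.stabMove (hcd.isDiagram_stabSet hR), ?_, hV'⟩
  rwa [stabSet_comm hac hac' hca']

end Commuting

/-! ### Move sequences -/

section MoveSequences

variable {R R' S : Finset Pt} {s : StabType} {L M : List MoveLabel} {A : List StabType}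

/-- The types of the stabilizations occurring in a list of moves, in their order of occurrence. -/
def stabTypes (L : List MoveLabel) : List StabType :=
  L.filterMap fun
    | .stab t => some t
    | _ => none

/-- The types of the destabilizations occurring in a list of moves, in their order of occurrence. -/
def destabTypes (L : List MoveLabel) : List StabType :=
  L.filterMap fun
    | .destab t => some t
    | _ => none

lemma count_stabTypes (L : List MoveLabel) (t : StabType) :
    (stabTypes L).count t = L.count (.stab t) := by
  rw [stabTypes, List.count_filterMap, List.count]
  congr! 2 with l
  cases l <;> simp

lemma count_destabTypes (L : List MoveLabel) (t : StabType) :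
    (destabTypes L).count t = L.count (.destab t) := by
  rw [destabTypes, List.count_filterMap, List.count]
  congr! 2 with l
  cases l <;> simp

lemma length_eq_count_add_count (A : List StabType) : A.length = A.count .I + A.count .II := by
  induction A with
  | nil => rfl
  | cons t A ih => cases t <;> simp [ih] <;> omega

lemma stabTypes_normalForm (A Z : List StabType) (hM : ∀ l ∈ M, l = .cyclic ∨ l = .comm) :
    stabTypes (A.map .stab ++ M ++ Z.map .destab) = A := by
  have hM' : M.filterMap (fun | .stab t => some t | _ => none) = [] :=
    List.filterMap_eq_nil_iff.2 fun l hl ↦ by rcases hM l hl with rfl | rfl <;> rfl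
  simp [stabTypes, List.filterMap_append, List.filterMap_map, hM']

lemma destabTypes_normalForm (A Z : List StabType) (hM : ∀ l ∈ M, l = .cyclic ∨ l = .comm) :
    destabTypes (A.map .stab ++ M ++ Z.map .destab) = Z := by
  have hM' : M.filterMap (fun | .destab t => some t | _ => none) = [] :=
    List.filterMap_eq_nil_iff.2 fun l hl ↦ by rcases hM l hl with rfl | rfl <;> rfl
  simp [destabTypes, List.filterMap_append, List.filterMap_map, hM']

lemma IsMoveSeq.append (h : IsMoveSeq L R S) (h' : IsMoveSeq M S R') :
    IsMoveSeq (L ++ M) R R' := by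
  induction L generalizing R with
  | nil =>
    cases h
    exact h'
  | cons l L ih =>
    obtain ⟨U, hl, hL⟩ := h
    exact ⟨U, hl, ih hL⟩

lemma ExchangeEquiv.exists_isMoveSeq (h : ExchangeEquiv R R') :
    ∃ M : List MoveLabel, IsMoveSeq M R R' ∧ ∀ l ∈ M, l = .cyclic ∨ l = .comm := by
  induction h using Relation.ReflTransGen.head_induction_on with
  | refl => exact ⟨[], rfl, by simp⟩
  | head hmove _ ih =>
    obtain ⟨M, hseq, hM⟩ := ih
    rcases hmove with hmove | hmove
    · exact ⟨.cyclic :: M, ⟨_, hmove, hseq⟩, by simpa using hM⟩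
    · exact ⟨.comm :: M, ⟨_, hmove, hseq⟩, by simpa using hM⟩

lemma IsMoveSeq.exists_of_exchangeEquiv (h : IsMoveSeq (A.map .stab) R S)
    (hex : ExchangeEquiv R R') : ∃ S', IsMoveSeq (A.map .stab) R' S' ∧ ExchangeEquiv S S' := by
  induction A generalizing R R' with
  | nil =>
    cases h
    exact ⟨R', rfl, hex⟩
  | cons t A ih =>
    obtain ⟨U, ht, hA⟩ := h
    obtain ⟨U', ht', hU⟩ := StabMove.exists_of_exchangeEquiv ht hex
    obtain ⟨S', hA', hS⟩ := ih hA hU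
    exact ⟨S', ⟨U', ht', hA'⟩, hS⟩

lemma StabMove.exists_of_isMoveSeq (hs : StabMove s R R') (hA : IsMoveSeq (A.map .stab) R S) :
    ∃ V V', IsMoveSeq (A.map .stab) R' V ∧ ExchangeEquiv V V' ∧ StabMove s S V' := by
  induction A generalizing R R' with
  | nil =>
    cases hA
    exact ⟨R', R', rfl, .refl, hs⟩
  | cons t A ih =>
    obtain ⟨U, ht, hA⟩ := hA
    obtain ⟨W, W', ht', hW, hs'⟩ := hs.exists_of_stabMove ht
    obtain ⟨V', V'', hA', hV', hs''⟩ := ih hs' hA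
    obtain ⟨V, hA'', hV⟩ := hA'.exists_of_exchangeEquiv hW.symm
    exact ⟨V, V'', ⟨W, ht', hA''⟩, hV.symm.trans hV', hs''⟩

lemma IsMoveSeq.exists_normalForm (h : IsMoveSeq L R R') :
    ∃ S S', IsMoveSeq ((stabTypes L).map .stab) R S ∧ ExchangeEquiv S S' ∧
      IsMoveSeq ((destabTypes L).map .destab) S' R' := by
  induction L generalizing R with
  | nil => exact ⟨R, R, rfl, .refl, h⟩
  | cons l L ih =>
    obtain ⟨U, hl, hL⟩ := h
    obtain ⟨S, S', hstab, hex, hdestab⟩ := ih hL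
    have of_exchangeMove (hmove : ExchangeMove R U) :
        ∃ S S', IsMoveSeq ((stabTypes L).map .stab) R S ∧ ExchangeEquiv S S' ∧
          IsMoveSeq ((destabTypes L).map .destab) S' R' := by
      obtain ⟨Q, hQ, hSQ⟩ := hstab.exists_of_exchangeEquiv (.single hmove.symm)
      exact ⟨Q, S', hQ, hSQ.symm.trans hex, hdestab⟩
    cases l with
    | cyclic => exact of_exchangeMove (.inl hl)
    | comm => exact of_exchangeMove (.inr hl)
    | stab t => exact ⟨S, S', ⟨U, hl, hstab⟩, hex, hdestab⟩
    | destab t =>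
      obtain ⟨V, V', hV, hVV', hSV'⟩ := StabMove.exists_of_isMoveSeq hl hstab
      obtain ⟨W, hW, hV'W⟩ := hSV'.exists_of_exchangeEquiv hex
      exact ⟨V, W, hV, hVV'.trans hV'W, S', hW, hdestab⟩

end MoveSequences

/-- **Lemma (stabilizations can be moved to the start).**  Any sequence of elementary moves
containing `k` stabilizations and `l` destabilizations can be replaced by a sequence with the
same endpoints in which the first `k` moves are stabilizations, the last `l` moves are
destabilizations, all other moves are cyclic permutations and commutations, and the number of
stabilizations and destabilizations of each type is the same as in the original sequence. -/
theorem stabilizations_to_start (L : List MoveLabel) (R₀ Rm : Finset Pt)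
    (h : IsMoveSeq L R₀ Rm) :
    ∃ A M Z : List MoveLabel,
      IsMoveSeq (A ++ M ++ Z) R₀ Rm ∧
      (∀ l ∈ A, ∃ t, l = MoveLabel.stab t) ∧
      (∀ l ∈ M, l = MoveLabel.cyclic ∨ l = MoveLabel.comm) ∧
      (∀ l ∈ Z, ∃ t, l = MoveLabel.destab t) ∧
      A.length = L.count (MoveLabel.stab StabType.I) + L.count (MoveLabel.stab StabType.II) ∧
      Z.length = L.count (MoveLabel.destab StabType.I) + L.count (MoveLabel.destab StabType.II) ∧
      (∀ t, (A ++ M ++ Z).count (MoveLabel.stab t) = L.count (MoveLabel.stab t)) ∧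
      (∀ t, (A ++ M ++ Z).count (MoveLabel.destab t) = L.count (MoveLabel.destab t)) := by
  obtain ⟨S, S', hstab, hex, hdestab⟩ := h.exists_normalForm
  obtain ⟨M, hseq, hM⟩ := hex.exists_isMoveSeq
  refine ⟨(stabTypes L).map .stab, M, (destabTypes L).map .destab,
    (hstab.append hseq).append hdestab, List.forall_mem_map.2 fun t _ ↦ ⟨t, rfl⟩, hM,
    List.forall_mem_map.2 fun t _ ↦ ⟨t, rfl⟩, ?_, ?_, ?_, ?_⟩
  · rw [List.length_map, length_eq_count_add_count, count_stabTypes, count_stabTypes]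
  · rw [List.length_map, length_eq_count_add_count, count_destabTypes, count_destabTypes]
  · intro t
    rw [← count_stabTypes, stabTypes_normalForm _ _ hM, count_stabTypes]
  · intro t
    rw [← count_destabTypes, destabTypes_normalForm _ _ hM, count_destabTypes]
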